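/- arXiv:math/9710222 — 4 statements merged into one kernel-verified Lean document; each statement's English description precedes it below -/
import Mathlib

section
/- Let F be a field complete with respect to a nontrivial nonarchimedean absolute value, let Ω be a fixed algebraic closure of F equipped with the spectral norm (the unique absolute value extending that of F), and let F₁ ⊆ Ω be a finite extension of F. Let (cₙ)_{n≥1} be a sequence in F₁ such that for every real C > 0 one has |cₙ|·Cⁿ → 0 as n → ∞ (so that f(x) = 1 + Σ_{n≥1} cₙ xⁿ is an entire power series), and for α ∈ Ω let f(α) denote the limit of the partial sums 1 + Σ_{n≤N} cₙ αⁿ, which exists in the complete field F₁(α). Let Z = {α ∈ Ω : f(α) = 0} be the set of zeroes of f. Then the intermediate field F((cₙ)_{n≥1}) generated over F by the coefficients of f is contained in the intermediate field F(Z) generated over F by the zeroes of f. -/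
open Filter Polynomial

section Ultrametric

variable {K : Type*} [NormedField K] [IsUltrametricDist K]

lemma norm_finsetSum_lt_of_forall_lt {ι : Type*} (s : Finset ι) (f : ι → K) {b : ℝ} (hb : 0 < b)
    (h : ∀ i ∈ s, ‖f i‖ < b) : ‖∑ i ∈ s, f i‖ < b := by
  rcases s.eq_empty_or_nonempty with rfl | hs
  · simpa using hb
  · obtain ⟨i, hi, hle⟩ := IsUltrametricDist.exists_norm_finsetSum_le_of_nonempty hs f
    exact hle.trans_lt (h i hi)

lemma norm_sub_le_max_norm (x y : K) : ‖x - y‖ ≤ max ‖x‖ ‖y‖ := by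
  simpa [sub_eq_add_neg] using IsUltrametricDist.norm_add_le_max x (-y)

lemma norm_sub_lt_of_lt_of_lt {x y : K} {b : ℝ} (hx : ‖x‖ < b) (hy : ‖y‖ < b) : ‖x - y‖ < b :=
  (norm_sub_le_max_norm x y).trans_lt (max_lt hx hy)

lemma norm_sub_le_of_le_of_le {x y : K} {b : ℝ} (hx : ‖x‖ ≤ b) (hy : ‖y‖ ≤ b) : ‖x - y‖ ≤ b :=
  (norm_sub_le_max_norm x y).trans (max_le hx hy)

/-- If the Gauss norm of `P` is attained at the leading coefficient and all coefficients of
`P * A` beyond the degree of `P` are small, then so are the nonconstant coefficients of `A`. -/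
lemma norm_coeff_mul_leadingCoeff_lt {P A : K[X]} {b : ℝ} (hb : 0 < b)
    (hP : ∀ i, ‖P.coeff i‖ ≤ ‖P.leadingCoeff‖)
    (hPA : ∀ n, P.natDegree < n → ‖(P * A).coeff n‖ < b) {j : ℕ} (hj : 0 < j) :
    ‖P.leadingCoeff‖ * ‖A.coeff j‖ < b := by
  induction hk : A.natDegree + 1 - j using Nat.strong_induction_on generalizing j with
  | _ k ih =>
    by_cases hjA : A.natDegree < j
    · simpa [coeff_eq_zero_of_natDegree_lt hjA] using hb
    have hmem : (P.natDegree, j) ∈ Finset.HasAntidiagonal.antidiagonal (P.natDegree + j) := by simp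
    have hsum : P.leadingCoeff * A.coeff j = (P * A).coeff (P.natDegree + j) -
        ∑ x ∈ (Finset.HasAntidiagonal.antidiagonal (P.natDegree + j)).erase (P.natDegree, j),
          P.coeff x.1 * A.coeff x.2 := by
      rw [coeff_mul, ← Finset.add_sum_erase _ _ hmem]
      simp
    rw [← norm_mul, hsum]
    refine norm_sub_lt_of_lt_of_lt (hPA _ (by omega)) (norm_finsetSum_lt_of_forall_lt _ _ hb ?_)
    rintro ⟨m, l⟩ hx
    simp only [Finset.mem_erase, ne_eq, Prod.mk.injEq, Finset.HasAntidiagonal.mem_antidiagonal] at hx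
    rw [norm_mul]
    rcases lt_or_ge P.natDegree m with hm | hm
    · simpa [coeff_eq_zero_of_natDegree_lt hm] using hb
    · have hl : j < l := by omega
      calc ‖P.coeff m‖ * ‖A.coeff l‖ ≤ ‖P.leadingCoeff‖ * ‖A.coeff l‖ := by gcongr; exact hP m
        _ < b := ih _ (by omega) (by omega) rfl

/-- Stability of the factorization of a polynomial with constant coefficient `1` into the part
`P` with roots in the closed unit disc and the part `U` with roots outside it. -/
lemma norm_coeff_sub_le_of_natDegree_le {P P' U U' : K[X]} {ε : ℝ}
    (hdeg : P'.natDegree ≤ P.natDegree)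
    (hU0 : U.coeff 0 = 1) (hU'0 : U'.coeff 0 = 1)
    (hP : ∀ i, ‖P.coeff i‖ ≤ ‖P.leadingCoeff‖)
    (hU' : ∀ i, 0 < i → ‖U'.coeff i‖ < 1)
    (hε : ∀ i, ‖(P * U - P' * U').coeff i‖ ≤ ε) (i : ℕ) :
    ‖(P - P').coeff i‖ ≤ ε := by
  have hε0 : 0 ≤ ε := (norm_nonneg _).trans (hε 0)
  set B := P - P' with hB
  obtain ⟨k, -, hk⟩ := (Finset.range (B.natDegree + 1)).exists_max_image
    (fun i => ‖B.coeff i‖) ⟨0, by simp⟩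
  replace hk : ∀ i, ‖B.coeff i‖ ≤ ‖B.coeff k‖ := fun i => by
    rcases lt_or_ge B.natDegree i with h | h
    · simp [coeff_eq_zero_of_natDegree_lt h]
    · exact hk i (by simpa [Nat.lt_succ_iff] using h)
  refine (hk i).trans ?_
  by_contra! hlt
  set b := ‖B.coeff k‖
  have hb : 0 < b := hε0.trans_lt hlt
  set A := U - U'
  have hE : P * A + B = (P * U - P' * U') - B * (U' - 1) := by simp only [A, hB]; ring
  have hElt (n) : ‖(P * A + B).coeff n‖ < b := by
    rw [hE, coeff_sub, coeff_mul]
    refine norm_sub_lt_of_lt_of_lt ((hε n).trans_lt hlt) (norm_finsetSum_lt_of_forall_lt _ _ hb ?_)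
    rintro ⟨l, m⟩ -
    rw [norm_mul]
    rcases Nat.eq_zero_or_pos m with rfl | hm
    · simpa [hU'0] using hb
    · have h1 : ‖(U' - 1).coeff m‖ < 1 := by
        simpa [coeff_one, hm.ne'] using hU' m hm
      calc ‖B.coeff l‖ * ‖(U' - 1).coeff m‖ ≤ b * ‖(U' - 1).coeff m‖ := by gcongr; exact hk l
        _ < b * 1 := by gcongr
        _ = b := mul_one b
  have hBdeg : B.natDegree ≤ P.natDegree := (natDegree_sub_le P P').trans (max_le le_rfl hdeg)
  have hA (j) : ‖P.leadingCoeff‖ * ‖A.coeff j‖ < b := by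
    rcases Nat.eq_zero_or_pos j with rfl | hj
    · simpa [A, hU0, hU'0] using hb
    · refine norm_coeff_mul_leadingCoeff_lt hb hP (fun n hn => ?_) hj
      simpa [coeff_eq_zero_of_natDegree_lt (hBdeg.trans_lt hn)] using hElt n
  have hPA (n) : ‖(P * A).coeff n‖ < b := by
    rw [coeff_mul]
    refine norm_finsetSum_lt_of_forall_lt _ _ hb fun x _ => ?_
    rw [norm_mul]
    refine lt_of_le_of_lt ?_ (hA x.2)
    gcongr
    exact hP _
  have := norm_sub_lt_of_lt_of_lt (hElt k) (hPA k)
  simp only [coeff_add, add_sub_cancel_left] at this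
  exact this.false

lemma norm_coeff_sub_le {P P' U U' : K[X]} {ε : ℝ}
    (hU0 : U.coeff 0 = 1) (hU'0 : U'.coeff 0 = 1)
    (hP : ∀ i, ‖P.coeff i‖ ≤ ‖P.leadingCoeff‖) (hP' : ∀ i, ‖P'.coeff i‖ ≤ ‖P'.leadingCoeff‖)
    (hU : ∀ i, 0 < i → ‖U.coeff i‖ < 1) (hU' : ∀ i, 0 < i → ‖U'.coeff i‖ < 1)
    (hε : ∀ i, ‖(P * U - P' * U').coeff i‖ ≤ ε) (i : ℕ) :
    ‖(P - P').coeff i‖ ≤ ε := by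
  rcases le_total P'.natDegree P.natDegree with h | h
  · exact norm_coeff_sub_le_of_natDegree_le h hU0 hU'0 hP hU' hε i
  · rw [coeff_sub, norm_sub_rev, ← coeff_sub]
    refine norm_coeff_sub_le_of_natDegree_le h hU'0 hU0 hP' hU (fun i => ?_) i
    rw [coeff_sub, norm_sub_rev, ← coeff_sub]
    exact hε i

lemma norm_coeff_multiset_prod_X_sub_C_le_one (s : Multiset K) (hs : ∀ r ∈ s, ‖r‖ ≤ 1) (i : ℕ) :
    ‖((s.map fun r => X - C r).prod).coeff i‖ ≤ 1 := by
  induction s using Multiset.induction_on generalizing i with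
  | empty => rcases i with _ | i <;> simp [coeff_one]
  | cons r s ih =>
    have ih' := ih fun r hr => hs r (Multiset.mem_cons_of_mem hr)
    have hr : ‖r‖ ≤ 1 := hs r (Multiset.mem_cons_self r s)
    rw [Multiset.map_cons, Multiset.prod_cons, sub_mul, coeff_sub, coeff_C_mul]
    refine norm_sub_le_of_le_of_le ?_ ?_
    · rcases i with _ | i
      · simp
      · simpa [coeff_X_mul] using ih' i
    · rw [norm_mul]
      exact mul_le_one₀ hr (norm_nonneg _) (ih' i)

lemma norm_coeff_multiset_prod_X_sub_C_lt (s : Multiset K) (hs : ∀ r ∈ s, 1 < ‖r‖) :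
    0 < ‖((s.map fun r => X - C r).prod).coeff 0‖ ∧
    ∀ i, 0 < i → ‖((s.map fun r => X - C r).prod).coeff i‖ <
      ‖((s.map fun r => X - C r).prod).coeff 0‖ := by
  induction s using Multiset.induction_on with
  | empty => simp +contextual [coeff_one, Nat.pos_iff_ne_zero]
  | cons r s ih =>
    obtain ⟨ih0, ih'⟩ := ih fun r hr => hs r (Multiset.mem_cons_of_mem hr)
    have hr : 1 < ‖r‖ := hs r (Multiset.mem_cons_self r s)
    set Q := (s.map fun r => X - C r).prod
    have h0 : ‖((X - C r) * Q).coeff 0‖ = ‖r‖ * ‖Q.coeff 0‖ := by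
      simp [sub_mul, mul_coeff_zero]
    rw [Multiset.map_cons, Multiset.prod_cons, h0]
    refine ⟨by positivity, fun i hi => ?_⟩
    rw [sub_mul, coeff_sub, coeff_C_mul]
    refine norm_sub_lt_of_lt_of_lt ?_ ?_
    · obtain ⟨i, rfl⟩ := Nat.exists_eq_add_of_lt hi
      rw [zero_add, coeff_X_mul]
      have : ‖Q.coeff i‖ ≤ ‖Q.coeff 0‖ := by
        rcases Nat.eq_zero_or_pos i with rfl | h
        · exact le_rfl
        · exact (ih' i h).le
      nlinarith
    · rw [norm_mul]
      have := ih' i hi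
      gcongr

/-- If `U` has constant coefficient `1` and integral coefficients, then `P` and `P * U` are close
in large discs. -/
lemma norm_coeff_mul_sub_coeff_mul_le {P U : K[X]} {B r : ℝ} (hB : 0 ≤ B) (hr : 1 ≤ r)
    (hU0 : U.coeff 0 = 1) (hU : ∀ i, ‖U.coeff i‖ ≤ 1)
    (h : ∀ n, ‖(P * U).coeff n‖ ≤ B * r ^ n) (n : ℕ) :
    ‖(P * U).coeff n - P.coeff n‖ * r ≤ B * r ^ n := by
  have hr0 : 0 < r := one_pos.trans_le hr
  have key (n : ℕ) (hn : ∀ m < n, ‖P.coeff m‖ ≤ B * r ^ m) :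
      ‖(P * U).coeff n - P.coeff n‖ * r ≤ B * r ^ n := by
    have hmem : (n, 0) ∈ Finset.HasAntidiagonal.antidiagonal n := by simp
    rw [coeff_mul, ← Finset.add_sum_erase _ _ hmem, hU0, mul_one, add_sub_cancel_left,
      ← le_div_iff₀ hr0]
    refine IsUltrametricDist.norm_sum_le_of_forall_le_of_nonneg (by positivity) ?_
    rintro ⟨m, l⟩ hx
    simp only [Finset.mem_erase, ne_eq, Prod.mk.injEq, Finset.HasAntidiagonal.mem_antidiagonal]
      at hx
    have hm : m < n := by omega
    rw [norm_mul, le_div_iff₀ hr0]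
    calc ‖P.coeff m‖ * ‖U.coeff l‖ * r ≤ B * r ^ m * 1 * r := by
          gcongr
          exacts [hn m hm, hU l]
      _ = B * r ^ (m + 1) := by ring
      _ ≤ B * r ^ n := by gcongr; exact hm
  refine key n fun m _ => ?_
  induction m using Nat.strong_induction_on with
  | _ m ih =>
    have h1 := key m fun l hl => ih l hl (by omega)
    have h2 : ‖(P * U).coeff m - P.coeff m‖ ≤ B * r ^ m :=
      (le_mul_of_one_le_right (norm_nonneg _) hr).trans h1
    simpa using norm_sub_le_of_le_of_le (h m) h2

/-- The roots of a polynomial whose Gauss norm is attained at the leading coefficient lie in the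
closed unit disc. -/
lemma norm_le_one_of_isRoot {P : K[X]} (hP0 : P ≠ 0) (hP : ∀ i, ‖P.coeff i‖ ≤ ‖P.leadingCoeff‖)
    {α : K} (hα : P.IsRoot α) : ‖α‖ ≤ 1 := by
  by_contra! hlt
  have hlead : 0 < ‖P.leadingCoeff‖ := by simpa using hP0
  rw [IsRoot, eval_eq_sum_range, Finset.sum_range_succ, add_comm, add_eq_zero_iff_eq_neg] at hα
  have h := norm_finsetSum_lt_of_forall_lt (Finset.range P.natDegree)
    (fun i => P.coeff i * α ^ i) (b := ‖P.leadingCoeff‖ * ‖α‖ ^ P.natDegree) (by positivity)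
    fun i hi => by
      rw [norm_mul, norm_pow]
      exact mul_lt_mul' (hP i) (pow_lt_pow_right₀ hlt (Finset.mem_range.1 hi)) (by positivity)
        hlead
  rw [← norm_neg, ← hα, norm_mul, norm_pow] at h
  exact h.false

variable [IsAlgClosed K]

lemma norm_coeff_le_leadingCoeff_of_roots {P : K[X]} (h : ∀ r ∈ P.roots, ‖r‖ ≤ 1) (i : ℕ) :
    ‖P.coeff i‖ ≤ ‖P.leadingCoeff‖ := by
  conv_lhs => rw [(IsAlgClosed.splits P).eq_prod_roots, coeff_C_mul, norm_mul]
  exact mul_le_of_le_one_right (norm_nonneg _) (norm_coeff_multiset_prod_X_sub_C_le_one _ h i)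

lemma norm_coeff_lt_one_of_roots {U : K[X]} (hU0 : U.coeff 0 = 1)
    (h : ∀ r ∈ U.roots, 1 < ‖r‖) {i : ℕ} (hi : 0 < i) : ‖U.coeff i‖ < 1 := by
  have hU : U ≠ 0 := by rintro rfl; simp at hU0
  have hlead : 0 < ‖U.leadingCoeff‖ := by simpa using hU
  rw [← norm_one (α := K), ← hU0, (IsAlgClosed.splits U).eq_prod_roots, coeff_C_mul, coeff_C_mul,
    norm_mul, norm_mul]
  have := (norm_coeff_multiset_prod_X_sub_C_lt _ h).2 i hi
  gcongr

/-- Splitting a polynomial over `E` into the part with roots in the closed unit disc and the part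
with roots outside it, provided conjugate elements have equal norms. -/
lemma exists_mul_eq_of_coeff_zero_eq_one {E L : Type*} [Field E] [NormedField L] [Algebra E L]
    [Algebra.IsAlgebraic E L]
    (hconj : ∀ α β : L, minpoly E α = minpoly E β → ‖α‖ = ‖β‖) (g : E[X]) (hg : g.coeff 0 = 1) :
    ∃ P U : E[X], P * U = g ∧ P.coeff 0 = 1 ∧ U.coeff 0 = 1 ∧
      (∀ r : L, aeval r P = 0 → ‖r‖ ≤ 1) ∧ ∀ r : L, aeval r U = 0 → 1 < ‖r‖ := by
  induction hn : g.natDegree using Nat.strong_induction_on generalizing g with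
  | _ n ih =>
    by_cases hroots : ∀ r : L, aeval r g = 0 → 1 < ‖r‖
    · exact ⟨1, g, by simp, by simp, hg, by simp, hroots⟩
    push Not at hroots
    obtain ⟨α, hα, hα1⟩ := hroots
    have hint : IsIntegral E α := Algebra.IsIntegral.isIntegral α
    obtain ⟨q, hq⟩ := minpoly.dvd E α hα
    have hmul : (minpoly E α).coeff 0 * q.coeff 0 = 1 := by rw [← mul_coeff_zero, ← hq, hg]
    have hm0 : (minpoly E α).coeff 0 ≠ 0 := left_ne_zero_of_mul_eq_one hmul
    have hq0 : q.coeff 0 ≠ 0 := right_ne_zero_of_mul_eq_one hmul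
    have hdeg : (C ((minpoly E α).coeff 0) * q).natDegree < n := by
      rw [natDegree_C_mul hm0, ← hn, hq, natDegree_mul (minpoly.ne_zero hint)
        (by rintro rfl; simp at hq0)]
      have := minpoly.natDegree_pos hint
      omega
    obtain ⟨P, U, hPU, hP0, hU0, hP, hU⟩ := ih _ hdeg (C ((minpoly E α).coeff 0) * q)
      (by rw [coeff_C_mul, hmul]) rfl
    refine ⟨C (q.coeff 0) * minpoly E α * P, U, ?_, ?_, hU0, fun r hr => ?_, hU⟩
    · rw [mul_assoc, hPU, hq]
      calc C (q.coeff 0) * minpoly E α * (C ((minpoly E α).coeff 0) * q)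
          = C ((minpoly E α).coeff 0 * q.coeff 0) * (minpoly E α * q) := by rw [C_mul]; ring
        _ = minpoly E α * q := by rw [hmul, C_1, one_mul]
    · rw [mul_coeff_zero, coeff_C_mul, hP0, mul_one, mul_comm, hmul]
    · rw [map_mul, map_mul, mul_eq_zero, mul_eq_zero, aeval_C] at hr
      rcases hr with (hr | hr) | hr
      · simp [hq0] at hr
      · rw [← hconj α r (minpoly.eq_of_irreducible_of_monic (minpoly.irreducible hint) hr
          (minpoly.monic hint))]
        exact hα1
      · exact hP r hr

/-- Weierstrass preparation on the closed unit disc, for a power series `∑ c n * x ^ n` whose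
coefficients lie in a complete intermediate field `E` and tend to zero. -/
theorem exists_polynomial_of_tendsto_zero {F : Type*} [Field F] [Algebra F K]
    (E : IntermediateField F K) [Algebra.IsAlgebraic E K] (hE : IsComplete (E : Set K))
    (hconj : ∀ α β : K, minpoly E α = minpoly E β → ‖α‖ = ‖β‖)
    (c : ℕ → K) (hc0 : c 0 = 1) (hcE : ∀ n, c n ∈ E) (hc : Tendsto c atTop (nhds 0)) :
    ∃ P : K[X], (∀ i, P.coeff i ∈ E) ∧ P.coeff 0 = 1 ∧
      (∀ α, P.IsRoot α →
        Tendsto (fun N : ℕ => ∑ n ∈ Finset.range N, c n * α ^ n) atTop (nhds 0)) ∧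
      ∀ B r : ℝ, 0 ≤ B → 1 ≤ r → (∀ n, ‖c n‖ ≤ B * r ^ n) →
        ∀ n, ‖c n - P.coeff n‖ * r ≤ B * r ^ n := by
  let g (N : ℕ) : E[X] := ∑ n ∈ Finset.range (N + 1), monomial n ⟨c n, hcE n⟩
  let f (N : ℕ) : K[X] := (g N).map (algebraMap E K)
  have hgcoeff (N i : ℕ) : (g N).coeff i = if i < N + 1 then ⟨c i, hcE i⟩ else 0 := by
    simp [g, coeff_monomial]
  have hfcoeff (N i : ℕ) : (f N).coeff i = if i < N + 1 then c i else 0 := by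
    rw [coeff_map, hgcoeff]
    split_ifs <;> simp
  have hfeval (N : ℕ) (α : K) :
      (f N).eval α = ∑ n ∈ Finset.range (N + 1), c n * α ^ n := by
    simp [f, g, Polynomial.map_sum, eval_finsetSum]
  have hfactor (N : ℕ) := exists_mul_eq_of_coeff_zero_eq_one hconj (g N) (by
    rw [hgcoeff, if_pos (by omega)]
    exact Subtype.ext hc0)
  choose P₀ U₀ hPU₀ hP₀0 hU₀0 hP₀ hU₀ using hfactor
  let P (N : ℕ) : K[X] := (P₀ N).map (algebraMap E K)
  let U (N : ℕ) : K[X] := (U₀ N).map (algebraMap E K)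
  have hPU (N : ℕ) : P N * U N = f N := by
    simp only [P, U, f, ← hPU₀ N, Polynomial.map_mul]
  have hP0 (N : ℕ) : (P N).coeff 0 = 1 := by simp [P, hP₀0]
  have hU0 (N : ℕ) : (U N).coeff 0 = 1 := by simp [U, hU₀0]
  have hPE (N i : ℕ) : (P N).coeff i ∈ E := by simp [P]
  have hP (N : ℕ) : ∀ i, ‖(P N).coeff i‖ ≤ ‖(P N).leadingCoeff‖ :=
    norm_coeff_le_leadingCoeff_of_roots fun r hr => hP₀ N r (by
      simpa [P, aeval_def, eval_map] using (mem_roots'.1 hr).2)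
  have hU (N i : ℕ) (hi : 0 < i) : ‖(U N).coeff i‖ < 1 :=
    norm_coeff_lt_one_of_roots (hU0 N) (fun r hr => hU₀ N r (by
      simpa [U, aeval_def, eval_map] using (mem_roots'.1 hr).2)) hi
  have hUle (N i : ℕ) : ‖(U N).coeff i‖ ≤ 1 := by
    rcases Nat.eq_zero_or_pos i with rfl | hi
    · simp [hU0]
    · exact (hU N i hi).le
  have hlead (N : ℕ) : 1 ≤ ‖(P N).leadingCoeff‖ := by simpa [hP0] using hP N 0
  have hcauchy (ε : ℝ) (hε : 0 < ε) :
      ∃ N₀, ∀ M ≥ N₀, ∀ N ≥ N₀, ∀ i, ‖(P M - P N).coeff i‖ ≤ ε := by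
    obtain ⟨N₀, hN₀⟩ := eventually_atTop.1
      ((tendsto_zero_iff_norm_tendsto_zero.1 hc).eventually_le_const hε)
    refine ⟨N₀, fun M hM N hN => norm_coeff_sub_le (hU0 M) (hU0 N) (hP M) (hP N) (hU M) (hU N) ?_⟩
    intro i
    rw [hPU, hPU, coeff_sub, hfcoeff, hfcoeff]
    rcases le_or_gt N₀ i with hi | hi
    · have := hN₀ i hi
      split_ifs <;> simp [this, hε.le]
    · rw [if_pos (by omega), if_pos (by omega)]
      simpa using hε.le
  have hlim (i : ℕ) : ∃ p ∈ E, Tendsto (fun N => (P N).coeff i) atTop (nhds p) := by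
    refine cauchySeq_tendsto_of_isComplete hE (fun N => hPE N i)
      (Metric.cauchySeq_iff'.2 fun ε hε => ?_)
    obtain ⟨N₀, hN₀⟩ := hcauchy (ε / 2) (by positivity)
    refine ⟨N₀, fun N hN => ?_⟩
    rw [dist_eq_norm, ← coeff_sub]
    exact (hN₀ N hN N₀ le_rfl i).trans_lt (by linarith)
  choose p hpE hp using hlim
  obtain ⟨N₁, hN₁⟩ := hcauchy (1 / 2) (by norm_num)
  have hdegle (M : ℕ) (hM : M ≥ N₁) (N : ℕ) (hN : N ≥ N₁) :
      (P M).natDegree ≤ (P N).natDegree := by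
    by_contra! hlt
    have h := hN₁ M hM N hN (P M).natDegree
    rw [coeff_sub, coeff_eq_zero_of_natDegree_lt hlt, sub_zero] at h
    have := hlead M
    rw [leadingCoeff] at this
    linarith
  set d := (P N₁).natDegree with hd
  have hdeg (N : ℕ) (hN : N ≥ N₁) : (P N).natDegree = d :=
    le_antisymm (hdegle N hN N₁ le_rfl) (hdegle N₁ le_rfl N hN)
  have hp_zero (i : ℕ) (hi : d < i) : p i = 0 := by
    refine tendsto_nhds_unique (hp i) (tendsto_const_nhds.congr' ?_)
    filter_upwards [eventually_ge_atTop N₁] with N hN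
    rw [coeff_eq_zero_of_natDegree_lt (by rwa [hdeg N hN])]
  have hp0 : p 0 = 1 := tendsto_nhds_unique (hp 0) (by simp [hP0])
  have hp_le (i : ℕ) : ‖p i‖ ≤ ‖p d‖ := by
    refine le_of_tendsto_of_tendsto (hp i).norm (hp d).norm ?_
    filter_upwards [eventually_ge_atTop N₁] with N hN
    simpa [leadingCoeff, hdeg N hN] using hP N i
  have hpd : p d ≠ 0 := by
    rw [← norm_pos_iff]
    refine one_pos.trans_le ?_
    simpa [hp0] using hp_le 0
  let Q : K[X] := ∑ n ∈ Finset.range (d + 1), monomial n (p n)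
  have hQcoeff (i : ℕ) : Q.coeff i = p i := by
    simp only [Q, finsetSum_coeff, coeff_monomial, Finset.sum_ite_eq', Finset.mem_range]
    split_ifs with h
    · rfl
    · rw [hp_zero i (by omega)]
  have hQ0 : Q ≠ 0 := fun h => hpd (by rw [← hQcoeff, h, coeff_zero])
  have hQdeg : Q.natDegree = d :=
    natDegree_eq_of_le_of_coeff_ne_zero
      (natDegree_le_iff_coeff_eq_zero.2 fun i hi => by rw [hQcoeff, hp_zero i hi])
      (by rwa [hQcoeff])
  refine ⟨Q, fun i => by rw [hQcoeff]; exact hpE i, by rw [hQcoeff, hp0], fun α hα => ?_,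
    fun B r hB hr hBr n => ?_⟩
  · have hα1 : ‖α‖ ≤ 1 := norm_le_one_of_isRoot hQ0 (fun i => by
      rw [leadingCoeff, hQdeg, hQcoeff, hQcoeff]; exact hp_le i) hα
    have hPα : Tendsto (fun N => (P N).eval α) atTop (nhds 0) := by
      have h : Tendsto (fun N => ∑ i ∈ Finset.range (d + 1), (P N).coeff i * α ^ i) atTop
          (nhds (∑ i ∈ Finset.range (d + 1), p i * α ^ i)) :=
        tendsto_finsetSum _ fun i _ => (hp i).mul_const _
      have hQα : ∑ i ∈ Finset.range (d + 1), p i * α ^ i = 0 := by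
        simpa [IsRoot, eval_eq_sum_range, hQdeg, hQcoeff] using hα
      rw [hQα] at h
      refine h.congr' ?_
      filter_upwards [eventually_ge_atTop N₁] with N hN
      rw [eval_eq_sum_range, hdeg N hN]
    have hUα (N : ℕ) : ‖(U N).eval α‖ ≤ 1 := by
      rw [eval_eq_sum_range]
      refine IsUltrametricDist.norm_sum_le_of_forall_le_of_nonneg zero_le_one fun i _ => ?_
      rw [norm_mul, norm_pow]
      exact mul_le_one₀ (hUle N i) (by positivity) (pow_le_one₀ (norm_nonneg _) hα1)
    rw [← tendsto_add_atTop_iff_nat 1]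
    refine squeeze_zero_norm (fun N => ?_) (tendsto_zero_iff_norm_tendsto_zero.1 hPα)
    rw [← hfeval, ← hPU, eval_mul, norm_mul]
    exact mul_le_of_le_one_right (norm_nonneg _) (hUα N)
  · rw [hQcoeff]
    refine le_of_tendsto (((tendsto_const_nhds.sub (hp n)).norm).mul_const r) ?_
    filter_upwards [eventually_ge_atTop n] with N hN
    have h := norm_coeff_mul_sub_coeff_mul_le hB hr (hU0 N) (hUle N) (P := P N) (fun m => by
      rw [hPU, hfcoeff]
      split_ifs
      · exact hBr m
      · rw [norm_zero]; positivity) n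
    rwa [hPU, hfcoeff, if_pos (by omega)] at h

end Ultrametric

/-- The coefficients of a polynomial with constant coefficient `1` lie in every intermediate
field containing its roots. -/
lemma coeff_mem_of_roots_mem {F L : Type*} [Field F] [Field L] [IsAlgClosed L] [Algebra F L]
    (M : IntermediateField F L) {P : L[X]} (hP0 : P.coeff 0 = 1) (hP : ∀ α, P.IsRoot α → α ∈ M)
    (i : ℕ) : P.coeff i ∈ M := by
  have hprod (s : Multiset L) (hs : ∀ r ∈ s, r ∈ M) (i : ℕ) :
      ((s.map fun r => X - C r).prod).coeff i ∈ M := by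
    induction s using Multiset.induction_on generalizing i with
    | empty =>
      rw [Multiset.map_zero, Multiset.prod_zero, coeff_one]
      split_ifs <;> simp
    | cons r s ih =>
      have ih' := ih fun r hr => hs r (Multiset.mem_cons_of_mem hr)
      rw [Multiset.map_cons, Multiset.prod_cons, sub_mul, coeff_sub, coeff_C_mul]
      refine sub_mem ?_ (mul_mem (hs r (Multiset.mem_cons_self r s)) (ih' i))
      rcases i with _ | i
      · simp
      · simpa [coeff_X_mul] using ih' i
  have hroots := hprod P.roots fun r hr => hP r (mem_roots'.1 hr).2
  have hsplit := (IsAlgClosed.splits P).eq_prod_roots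
  have hlead : P.leadingCoeff ∈ M := by
    have h : P.leadingCoeff * ((P.roots.map fun r => X - C r).prod).coeff 0 = 1 := by
      rw [← coeff_C_mul, ← hsplit, hP0]
    rw [eq_inv_of_mul_eq_one_left h]
    exact inv_mem (hroots 0)
  rw [hsplit, coeff_C_mul]
  exact mul_mem hlead (hroots i)

/-- For an entire power series `f(x) = 1 + ∑_{n≥1} cₙ xⁿ` with coefficients in a
finite extension `F₁` of a complete nontrivially valued nonarchimedean field `F`, the field
generated over `F` by the coefficients of `f` is contained in the field generated by the
zeroes of `f` (inside an algebraic closure `Ω` of `F` carrying the spectral norm). -/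
theorem stmt_2 (F : Type*) [NontriviallyNormedField F] [CompleteSpace F] [IsUltrametricDist F]
    (Ω : Type*) [NormedField Ω] [IsUltrametricDist Ω] [Algebra F Ω] [IsAlgClosure F Ω]
    (hext : ∀ x : F, ‖algebraMap F Ω x‖ = ‖x‖)
    (F₁ : IntermediateField F Ω) [FiniteDimensional F F₁]
    (c : ℕ → Ω) (hc0 : c 0 = 1) (hcF₁ : ∀ n, c n ∈ F₁)
    (hentire : ∀ C : ℝ, 0 < C →
      Tendsto (fun n : ℕ => ‖c n‖ * C ^ n) atTop (nhds 0)) :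
    IntermediateField.adjoin F (Set.range c) ≤
      IntermediateField.adjoin F
        {α : Ω | Tendsto (fun N : ℕ => ∑ n ∈ Finset.range N, c n * α ^ n) atTop (nhds 0)} := by
  let _ : NormedAlgebra F Ω :=
    { norm_smul_le := fun r x => by rw [Algebra.smul_def, norm_mul, hext] }
  have : IsAlgClosed Ω := IsAlgClosure.isAlgClosed F
  have : Algebra.IsAlgebraic F Ω := IsAlgClosure.isAlgebraic
  set Z := {α : Ω | Tendsto (fun N : ℕ => ∑ n ∈ Finset.range N, c n * α ^ n) atTop (nhds 0)}
    with hZ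
  set M := IntermediateField.adjoin F Z
  have hconj (α β : Ω) (h : minpoly F₁ α = minpoly F₁ β) : ‖α‖ = ‖β‖ := by
    have hF : minpoly F α = minpoly F β := by
      refine minpoly.eq_of_irreducible_of_monic
        (minpoly.irreducible (Algebra.IsIntegral.isIntegral α)) ?_
        (minpoly.monic (Algebra.IsIntegral.isIntegral α))
      have hdvd := minpoly.dvd_map_of_isScalarTower F F₁ α
      rw [h] at hdvd
      simpa using aeval_eq_zero_of_dvd_aeval_eq_zero hdvd (minpoly.aeval F₁ β)
    rw [NormedAlgebra.norm_eq_spectralNorm F α, NormedAlgebra.norm_eq_spectralNorm F β,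
      spectralNorm, spectralNorm, hF]
  have hcomplete : IsComplete (F₁ : Set Ω) :=
    Submodule.complete_of_finiteDimensional (Subalgebra.toSubmodule F₁.toSubalgebra)
  have : FiniteDimensional F (Subalgebra.toSubmodule (F₁ ⊓ M).toSubalgebra) :=
    Submodule.finiteDimensional_of_le (S₂ := Subalgebra.toSubmodule F₁.toSubalgebra)
      fun x hx => hx.1
  have hclosed : IsClosed ((F₁ ⊓ M : IntermediateField F Ω) : Set Ω) :=
    Submodule.closed_of_finiteDimensional (Subalgebra.toSubmodule (F₁ ⊓ M).toSubalgebra)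
  obtain ⟨B, hB⟩ : ∃ B, ∀ n, ‖c n‖ ≤ B := by
    obtain ⟨B, hB⟩ := (hentire 1 one_pos).bddAbove_range
    exact ⟨B, fun n => by simpa using hB ⟨n, rfl⟩⟩
  have hB0 : 0 ≤ B := (norm_nonneg _).trans (hB 0)
  rw [IntermediateField.adjoin_le_iff]
  rintro _ ⟨n, rfl⟩
  suffices c n ∈ F₁ ⊓ M from this.2
  refine hclosed.closure_subset (Metric.mem_closure_iff.2 fun ε hε => ?_)
  obtain ⟨ρ, hρ⟩ := NormedField.exists_lt_norm F (max 1 (B / ε))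
  obtain ⟨hρ1, hρB⟩ := max_lt_iff.1 hρ
  set σ : Ω := algebraMap F Ω ρ
  have hσ : ‖σ‖ = ‖ρ‖ := hext ρ
  have hσ0 : σ ≠ 0 := norm_pos_iff.1 (by rw [hσ]; linarith)
  obtain ⟨P, hPF₁, hP0, hPZ, hPc⟩ := exists_polynomial_of_tendsto_zero F₁ hcomplete hconj
    (fun n => c n * σ ^ n) (by simp [hc0])
    (fun n => mul_mem (hcF₁ n) (pow_mem (F₁.algebraMap_mem ρ) n))
    (tendsto_zero_iff_norm_tendsto_zero.2 (by
      simpa [norm_mul, norm_pow] using hentire ‖σ‖ (norm_pos_iff.2 hσ0)))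
  have hPM (i : ℕ) : P.coeff i ∈ M := by
    refine coeff_mem_of_roots_mem M hP0 (fun α hα => ?_) i
    have hmem : σ * α ∈ M := IntermediateField.subset_adjoin F Z (by
      simpa [hZ, mul_pow, mul_assoc] using hPZ α hα)
    simpa only [σ, inv_mul_cancel_left₀ hσ0] using
      mul_mem (inv_mem (M.algebraMap_mem ρ)) hmem
  refine ⟨P.coeff n * (σ ^ n)⁻¹, ⟨?_, ?_⟩, ?_⟩
  · exact mul_mem (hPF₁ n) (inv_mem (pow_mem (F₁.algebraMap_mem ρ) n))
  · exact mul_mem (hPM n) (inv_mem (pow_mem (M.algebraMap_mem ρ) n))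
  · have h := hPc B ‖ρ‖ hB0 hρ1.le (fun m => by
      rw [norm_mul, norm_pow, hσ]
      gcongr
      exact hB m) n
    have hfac : c n * σ ^ n - P.coeff n = (c n - P.coeff n * (σ ^ n)⁻¹) * σ ^ n := by
      field_simp
    rw [hfac, norm_mul, norm_pow, hσ, mul_right_comm] at h
    have h' := le_of_mul_le_mul_right h (by positivity)
    rw [dist_eq_norm]
    rw [div_lt_iff₀ hε] at hρB
    by_contra! hge
    have : ε * ‖ρ‖ ≤ ‖c n - P.coeff n * (σ ^ n)⁻¹‖ * ‖ρ‖ := by gcongr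
    linarith
end

section
/- Let r = p^m with p prime, let K = 𝔽_r((X)) be the field of formal Laurent series over 𝔽_r with its X-adic absolute value, and set T := X⁻¹ ∈ K. Let C_∞ be the completion, with respect to the spectral norm, of a fixed algebraic closure of K, and let ι : K → C_∞ be the canonical embedding. Let t ≥ 1 and let N be a nilpotent t×t matrix with entries in C_∞. Then there exists exactly one continuous 𝔽_r-algebra homomorphism φ : K → M_t(C_∞) (matrices topologized by entrywise convergence) with φ(T) = ι(T)·1 + N. Moreover, for every x ∈ K one has φ(x) = ι(x)·1 + N_x, where N_x is nilpotent and is a polynomial in N with coefficients in ι(K). -/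
set_option synthInstance.maxHeartbeats 1000000
set_option maxHeartbeats 1000000

/-- The element `T := X⁻¹` of `K = 𝔽_r((X))`, a uniformizer at the infinite place of
`𝔽_r(T)`. -/
noncomputable def laurentT (Fr : Type*) [Field Fr] : LaurentSeries Fr :=
  (HahnSeries.single (1 : ℤ) (1 : Fr))⁻¹

namespace LaurentSeries

section GradedPart

variable {F : Type*} [Field F] (q : ℕ)

/-- The part of a Laurent series supported on the exponents `n` with `n ≡ -k` modulo `q`. -/
noncomputable def gradedPart (k : ZMod q) : LaurentSeries F →+ LaurentSeries F where
  toFun x :=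
    { coeff := fun n => if (n : ZMod q) = -k then x.coeff n else 0
      isPWO_support' := x.isPWO_support.mono fun n hn => by
        simp only [Function.mem_support, ne_eq, ite_eq_right_iff, Classical.not_imp] at hn
        exact hn.2 }
  map_add' x y := by
    ext n
    simp only [HahnSeries.coeff_add]
    split_ifs <;> simp
  map_zero' := by
    ext n
    simp

theorem coeff_gradedPart (k : ZMod q) (x : LaurentSeries F) (n : ℤ) :
    (gradedPart q k x).coeff n = if (n : ZMod q) = -k then x.coeff n else 0 := rfl

theorem coeff_sum {ι : Type*} (s : Finset ι) (f : ι → LaurentSeries F) (n : ℤ) :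
    (∑ i ∈ s, f i).coeff n = ∑ i ∈ s, (f i).coeff n :=
  map_sum (HahnSeries.coeff.addMonoidHom n : LaurentSeries F →+ F) f s

theorem sum_gradedPart [NeZero q] (x : LaurentSeries F) : ∑ k, gradedPart q k x = x := by
  ext n
  rw [coeff_sum]
  simp only [coeff_gradedPart, ← neg_eq_iff_eq_neg]
  simp

theorem gradedPart_single (k : ZMod q) (n : ℤ) (c : F) :
    gradedPart q k (HahnSeries.single n c) =
      if (n : ZMod q) = -k then HahnSeries.single n c else 0 := by
  ext a
  rw [coeff_gradedPart]
  by_cases h : a = n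
  · subst h
    split_ifs <;> simp
  · split_ifs <;> simp [HahnSeries.coeff_single_of_ne h]

theorem gradedPart_gradedPart_mul (k i j : ZMod q) (x y : LaurentSeries F) :
    gradedPart q k (gradedPart q i x * gradedPart q j y) =
      if i + j = k then gradedPart q i x * gradedPart q j y else 0 := by
  ext n
  rw [coeff_gradedPart]
  by_cases h0 : (gradedPart q i x * gradedPart q j y).coeff n = 0
  · split_ifs <;> simp [h0]
  · obtain ⟨a, ha, b, hb, rfl⟩ := HahnSeries.support_mul_subset ((HahnSeries.mem_support _ _).2 h0)
    have ha' : (a : ZMod q) = -i := by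
      by_contra h
      exact ha (by rw [coeff_gradedPart, if_neg h])
    have hb' : (b : ZMod q) = -j := by
      by_contra h
      exact hb (by rw [coeff_gradedPart, if_neg h])
    have : ((a + b : ℤ) : ZMod q) = -k ↔ i + j = k := by
      rw [Int.cast_add, ha', hb', ← neg_add, neg_inj]
    simp only [this]
    split_ifs <;> rfl

theorem gradedPart_mul [NeZero q] (k : ZMod q) (x y : LaurentSeries F) :
    gradedPart q k (x * y) =
      ∑ i, ∑ j, if i + j = k then gradedPart q i x * gradedPart q j y else 0 := by
  conv_lhs => rw [← sum_gradedPart q x, ← sum_gradedPart q y, Finset.sum_mul_sum]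
  simp only [map_sum, gradedPart_gradedPart_mul]

theorem valuation_gradedPart_le (k : ZMod q) (x : LaurentSeries F) :
    Valued.v (gradedPart q k x) ≤ Valued.v x := by
  rcases eq_or_ne x 0 with rfl | hx
  · simp
  · have hv : Valued.v x ≠ 0 := (Valuation.ne_zero_iff _).2 hx
    rw [valuation_le_iff_coeff_lt_log_eq_zero _ hv]
    intro n hn
    rw [coeff_gradedPart, (valuation_le_iff_coeff_lt_log_eq_zero _ hv).1 le_rfl n hn, ite_self]

theorem continuous_gradedPart (k : ZMod q) :
    Continuous (gradedPart q k : LaurentSeries F → LaurentSeries F) := by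
  refine continuous_of_continuousAt_zero (gradedPart q k) ?_
  rw [ContinuousAt, map_zero]
  refine ((Valued.hasBasis_nhds_zero _ _).tendsto_iff (Valued.hasBasis_nhds_zero _ _)).2
    fun γ _ => ⟨γ, trivial, fun x hx => ?_⟩
  exact (Valued.v.restrict_le_iff.2 (valuation_gradedPart_le q k x)).trans_lt hx

end GradedPart

section Twist

variable {F B : Type*} [Field F] [Ring B] [Algebra (LaurentSeries F) B] [Algebra F B]
  [IsScalarTower F (LaurentSeries F) B] (q : ℕ) [NeZero q]

theorem pow_val_add {v : B} (hv : v ^ q = 1) (i j : ZMod q) :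
    v ^ (i + j).val = v ^ i.val * v ^ j.val := by
  rw [ZMod.val_add, ← pow_add, ← pow_eq_pow_mod _ hv]

/-- For `v` with `v ^ q = 1`, the algebra homomorphism multiplying the monomial `X ^ n` by
`v ^ (-n)`. -/
noncomputable def twist (v : B) (hv : v ^ q = 1) : LaurentSeries F →ₐ[F] B :=
  have hC (c : F) : ∑ k, algebraMap (LaurentSeries F) B (gradedPart q k (HahnSeries.single 0 c)) *
      v ^ k.val = algebraMap F B c := by
    have h : HahnSeries.single 0 c = c • (1 : LaurentSeries F) := by
      ext n
      rw [← HahnSeries.single_zero_one, HahnSeries.coeff_smul, smul_eq_mul]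
      by_cases hn : n = 0 <;> simp [hn]
    rw [Finset.sum_eq_single 0]
    · rw [gradedPart_single, if_pos (by simp), ZMod.val_zero, pow_zero, mul_one,
        Algebra.algebraMap_eq_smul_one, Algebra.algebraMap_eq_smul_one, h, smul_assoc, one_smul]
    · intro k _ hk
      rw [gradedPart_single, if_neg (by simpa using hk), map_zero, zero_mul]
    · simp
  { toFun := fun x => ∑ k, algebraMap (LaurentSeries F) B (gradedPart q k x) * v ^ k.val
    map_one' := by
      rw [← HahnSeries.single_zero_one, hC, map_one]
    map_zero' := by simp
    map_add' := fun x y => by simp only [map_add, add_mul, Finset.sum_add_distrib]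
    map_mul' := fun x y => by
      have hcomm (i j : ZMod q) :
          algebraMap (LaurentSeries F) B (gradedPart q i x * gradedPart q j y) * v ^ (i + j).val =
            algebraMap (LaurentSeries F) B (gradedPart q i x) * v ^ i.val *
              (algebraMap (LaurentSeries F) B (gradedPart q j y) * v ^ j.val) := by
        rw [pow_val_add q hv, map_mul, mul_assoc, mul_assoc, ← mul_assoc _ (v ^ i.val),
          Algebra.commutes _ (v ^ i.val), mul_assoc]
      rw [Finset.sum_mul_sum]
      simp only [← hcomm, gradedPart_mul q, map_sum, Finset.sum_mul]
      rw [Finset.sum_comm]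
      refine Finset.sum_congr rfl fun i _ => ?_
      rw [Finset.sum_comm]
      refine Finset.sum_congr rfl fun j _ => ?_
      rw [Finset.sum_eq_single (i + j)]
      · rw [if_pos rfl]
      · intro k _ hk
        rw [if_neg hk.symm, map_zero, zero_mul]
      · simp
    commutes' := fun c => by
      rw [LaurentSeries.algebraMap_apply, HahnSeries.C_apply]
      exact hC c }

theorem twist_apply (v : B) (hv : v ^ q = 1) (x : LaurentSeries F) :
    twist q v hv x = ∑ k, algebraMap (LaurentSeries F) B (gradedPart q k x) * v ^ k.val := by
  rfl

theorem continuous_twist [TopologicalSpace B] [IsTopologicalRing B] (v : B) (hv : v ^ q = 1)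
    (hB : Continuous (algebraMap (LaurentSeries F) B)) : Continuous (twist (F := F) q v hv) := by
  simp only [funext (twist_apply q v hv)]
  exact continuous_finsetSum _ fun k _ =>
    (hB.comp (continuous_gradedPart q k)).mul continuous_const

theorem laurentT_eq_single : laurentT F = HahnSeries.single (-1) 1 := by
  rw [laurentT, HahnSeries.inv_single, inv_one]

theorem twist_laurentT (v : B) (hv : v ^ q = 1) :
    twist q v hv (laurentT F) = algebraMap (LaurentSeries F) B (laurentT F) * v := by
  rw [twist_apply, laurentT_eq_single]
  simp only [gradedPart_single, Int.cast_neg, Int.cast_one, neg_inj]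
  rw [Finset.sum_eq_single 1]
  · rw [if_pos rfl, ZMod.val_one_eq_one_mod, ← pow_eq_pow_mod _ hv, pow_one]
  · intro k _ hk
    rw [if_neg hk.symm, map_zero, zero_mul]
  · simp

end Twist

section

variable {F B : Type*} [Field F] [Ring B]

theorem algHom_ext_of_continuous [Algebra F B] [TopologicalSpace B] [T2Space B]
    {φ ψ : LaurentSeries F →ₐ[F] B} (hφ : Continuous φ) (hψ : Continuous ψ)
    (h : φ (laurentT F) = ψ (laurentT F)) : φ = ψ := by
  have hinv (x : LaurentSeries F) (hx : φ x = ψ x) : φ x⁻¹ = ψ x⁻¹ := by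
    rcases eq_or_ne x 0 with rfl | h0
    · simp
    · refine left_inv_eq_right_inv (a := φ x) ?_ ?_
      · rw [← map_mul, inv_mul_cancel₀ h0, map_one]
      · rw [hx, ← map_mul, mul_inv_cancel₀ h0, map_one]
  have hX : φ (HahnSeries.single 1 1) = ψ (HahnSeries.single 1 1) := by
    simpa [laurentT] using hinv _ h
  have hpoly (P : Polynomial F) : φ (algebraMap _ _ P) = ψ (algebraMap _ _ P) := by
    have : φ.toRingHom.comp (algebraMap (Polynomial F) (LaurentSeries F)) =
        ψ.toRingHom.comp (algebraMap (Polynomial F) (LaurentSeries F)) := by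
      refine Polynomial.ringHom_ext (fun a => ?_) ?_
      · have : algebraMap (Polynomial F) (LaurentSeries F) (Polynomial.C a) = algebraMap F _ a := by
          simp [LaurentSeries.algebraMap_apply, HahnSeries.C_apply]
        simp only [RingHom.comp_apply, this]
        exact (φ.commutes a).trans (ψ.commutes a).symm
      · simpa using hX
    exact DFunLike.congr_fun this P
  refine DFunLike.coe_injective (coe_range_dense.equalizer hφ hψ (funext fun f => ?_))
  induction f using RatFunc.induction_on with
  | f P Q hQ =>
    rw [Function.comp_apply, Function.comp_apply, RatFunc.algebraMap_apply_div, div_eq_mul_inv,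
      map_mul, map_mul, hpoly, hinv _ (hpoly Q)]

variable [Algebra (LaurentSeries F) B] [Algebra F B] [IsScalarTower F (LaurentSeries F) B]

theorem twist_sub_algebraMap (q : ℕ) [NeZero q] (N : B) (c : LaurentSeries F)
    (hv : (1 + c • N) ^ q = 1) (x : LaurentSeries F) :
    ∃ P : Polynomial (LaurentSeries F),
      twist q (1 + c • N) hv x - algebraMap (LaurentSeries F) B x =
        Polynomial.aeval N (Polynomial.X * P) := by
  let Q : Polynomial (LaurentSeries F) := ∑ k : ZMod q, Polynomial.C (gradedPart q k x) *
    ((1 + Polynomial.C c * Polynomial.X) ^ k.val - 1)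
  have hQ : Polynomial.X ∣ Q :=
    Finset.dvd_sum fun k _ => Dvd.dvd.mul_left
      (Polynomial.X_dvd_iff.2 (by simp [Polynomial.coeff_zero_eq_eval_zero])) _
  obtain ⟨P, hP⟩ := hQ
  refine ⟨P, ?_⟩
  rw [← hP, twist_apply]
  have hx : algebraMap (LaurentSeries F) B x =
      ∑ k, algebraMap (LaurentSeries F) B (gradedPart q k x) := by
    rw [← map_sum, sum_gradedPart]
  rw [hx, ← Finset.sum_sub_distrib, map_sum]
  refine Finset.sum_congr rfl fun k _ => ?_
  simp [mul_sub, Algebra.smul_def]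

end

end LaurentSeries

/-- given a nilpotent `t×t` matrix `N` over `C_∞`, there is exactly one
continuous `𝔽_r`-algebra homomorphism `φ : K → M_t(C_∞)` with `φ(T) = ι(T)·1 + N`; moreover
its values have the form `φ(x) = ι(x)·1 + N_x` with `N_x` nilpotent, a polynomial in `N` with
coefficients in `ι(K)`. -/
theorem stmt_6 (p m : ℕ) [Fact p.Prime] (hm : 0 < m)
    (Fr : Type*) [Field Fr] [Fintype Fr] (hcard : Fintype.card Fr = p ^ m)
    (C : Type*) [NormedField C] [CompleteSpace C] [IsAlgClosed C] [IsUltrametricDist C]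
    [Algebra (LaurentSeries Fr) C] [Algebra Fr C] [IsScalarTower Fr (LaurentSeries Fr) C]
    (hι : Continuous (algebraMap (LaurentSeries Fr) C))
    (t : ℕ) (ht : 1 ≤ t) (N : Matrix (Fin t) (Fin t) C) (hN : IsNilpotent N) :
    (∃! φ : LaurentSeries Fr →ₐ[Fr] Matrix (Fin t) (Fin t) C,
        Continuous φ ∧
        φ (laurentT Fr) =
          algebraMap (LaurentSeries Fr) (Matrix (Fin t) (Fin t) C) (laurentT Fr) + N) ∧
    ∀ φ : LaurentSeries Fr →ₐ[Fr] Matrix (Fin t) (Fin t) C,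
      (Continuous φ ∧
        φ (laurentT Fr) =
          algebraMap (LaurentSeries Fr) (Matrix (Fin t) (Fin t) C) (laurentT Fr) + N) →
      ∀ x : LaurentSeries Fr,
        IsNilpotent (φ x - algebraMap (LaurentSeries Fr) (Matrix (Fin t) (Fin t) C) x) ∧
        ∃ q : Polynomial (LaurentSeries Fr),
          φ x - algebraMap (LaurentSeries Fr) (Matrix (Fin t) (Fin t) C) x =
            Polynomial.aeval N q := by
  have : Nonempty (Fin t) := ⟨⟨0, ht⟩⟩
  have : CharP Fr p := charP_of_card_eq_prime_pow hcard
  have : CharP C p := charP_of_injective_algebraMap (algebraMap Fr C).injective p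
  obtain ⟨s, hs⟩ := hN
  have : NeZero (p ^ s) := ⟨pow_ne_zero _ (Fact.out : p.Prime).ne_zero⟩
  have hNq : N ^ p ^ s = 0 :=
    pow_eq_zero_of_le (Nat.lt_pow_self (Fact.out : p.Prime).one_lt).le hs
  let c : LaurentSeries Fr := HahnSeries.single 1 1
  have hv : (1 + c • N) ^ p ^ s = 1 := by
    rw [add_pow_char_pow_of_commute p s (Commute.one_left _), one_pow, smul_pow, hNq, smul_zero,
      add_zero]
  have hcont : Continuous (algebraMap (LaurentSeries Fr) (Matrix (Fin t) (Fin t) C)) := by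
    refine continuous_matrix fun i j => ?_
    simp only [Matrix.algebraMap_matrix_apply]
    split_ifs
    exacts [hι, continuous_const]
  have hΦ := LaurentSeries.continuous_twist (p ^ s) (1 + c • N) hv hcont
  have hT : LaurentSeries.twist (p ^ s) (1 + c • N) hv (laurentT Fr) =
      algebraMap (LaurentSeries Fr) (Matrix (Fin t) (Fin t) C) (laurentT Fr) + N := by
    have hc : laurentT Fr * c = 1 := inv_mul_cancel₀ (by simp)
    rw [LaurentSeries.twist_laurentT, mul_add, mul_one, ← Algebra.smul_def, smul_smul, hc,
      one_smul]
  refine ⟨⟨_, ⟨hΦ, hT⟩, fun ψ hψ =>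
    LaurentSeries.algHom_ext_of_continuous hψ.1 hΦ (hψ.2.trans hT.symm)⟩, fun φ hφ x => ?_⟩
  obtain rfl := LaurentSeries.algHom_ext_of_continuous hφ.1 hΦ (hφ.2.trans hT.symm)
  obtain ⟨P, hP⟩ := LaurentSeries.twist_sub_algebraMap (p ^ s) N c hv x
  refine ⟨?_, _, hP⟩
  rw [hP, map_mul, Polynomial.aeval_X]
  refine Commute.isNilpotent_mul_right ?_ ⟨s, hs⟩
  rw [commute_iff_eq]
  simpa using congrArg (Polynomial.aeval N) (mul_comm Polynomial.X P)
end

section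
/- Let R be a commutative ring and let D_n : R[X] → R[X] denote the n-th Hasse derivative. For n ≥ 1, j ≥ 1 let P(n,j) be the finite set of tuples μ = (μ₁,…,μₙ) of nonnegative integers with Σᵢ μᵢ = j and Σᵢ i·μᵢ = n, and for j ≤ m let M_μ(m) := m!/(μ₁!⋯μₙ!·(m−j)!) ∈ ℤ (equivalently m(m−1)⋯(m−j+1)/(μ₁!⋯μₙ!)), an integer (a multinomial coefficient). Then for every f ∈ R[X] and all integers n ≥ 1, m ≥ 1: D_n(f^m) = Σ_{j=1}^{min(n,m)} f^{m−j} · ( Σ_{μ ∈ P(n,j)} M_μ(m) · Π_{i=1}^{n} (D_i f)^{μᵢ} ), where the integers M_μ(m) act on R[X] via the canonical ring map ℤ → R. -/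
open Polynomial

/-- The finite set `P(n,j)` of tuples `μ = (μ₁, …, μₙ)` of nonnegative integers with
`∑ᵢ μᵢ = j` and `∑ᵢ i·μᵢ = n` (indexing: `μ i` stands for `μ_{i+1}`). -/
noncomputable def tuplesPnj (n j : ℕ) : Finset (Fin n → ℕ) :=
  (Fintype.piFinset fun _ : Fin n => Finset.range (n + 1)).filter
    (fun μ => (∑ i : Fin n, μ i) = j ∧ (∑ i : Fin n, (i.1 + 1) * μ i) = n)

/-- The multinomial coefficient `M_μ(m) = m!/(μ₁!⋯μₙ!(m−j)!)`, where `j = ∑ μᵢ`,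
written as `choose m j * j!/(μ₁!⋯μₙ!)`. -/
def Mcoef (m j : ℕ) {n : ℕ} (μ : Fin n → ℕ) : ℕ :=
  m.choose j * Nat.multinomial Finset.univ μ

/-- The generating series `∑ₙ Dₙ(f) Tⁿ` of the Hasse derivatives of `f`. -/
noncomputable def hasseSeries {R : Type*} [CommRing R] (f : R[X]) : PowerSeries R[X] :=
  PowerSeries.mk fun n => hasseDeriv n f

theorem hasseSeries_mul {R : Type*} [CommRing R] (f g : R[X]) :
    hasseSeries (f * g) = hasseSeries f * hasseSeries g := by
  ext1 n
  simp [hasseSeries, PowerSeries.coeff_mul, hasseDeriv_mul]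

theorem hasseSeries_one {R : Type*} [CommRing R] : hasseSeries (1 : R[X]) = 1 := by
  ext1 n
  rcases Nat.eq_zero_or_pos n with rfl | hn
  · simp [hasseSeries]
  · simp [hasseSeries, PowerSeries.coeff_one, hasseDeriv_apply_one n hn, hn.ne']

theorem hasseSeries_pow {R : Type*} [CommRing R] (f : R[X]) (m : ℕ) :
    hasseSeries (f ^ m) = hasseSeries f ^ m := by
  induction m with
  | zero => simp [hasseSeries_one]
  | succ m ih => rw [pow_succ, hasseSeries_mul, ih, pow_succ]

/-- The coefficient of `Tⁿ` in a power of a series depends only on its truncation. -/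
theorem PowerSeries.coeff_pow_eq_of_coeff_eq {A : Type*} [CommRing A] {p q : PowerSeries A}
    {n : ℕ} (h : ∀ k ≤ n, PowerSeries.coeff k p = PowerSeries.coeff k q) (m : ℕ) :
    PowerSeries.coeff n (p ^ m) = PowerSeries.coeff n (q ^ m) := by
  have hdvd : (PowerSeries.X : PowerSeries A) ^ (n + 1) ∣ p - q := by
    rw [PowerSeries.X_pow_dvd_iff]
    intro k hk
    rw [map_sub, h k (by omega), sub_self]
  have hpow := PowerSeries.X_pow_dvd_iff.1 (hdvd.trans (sub_dvd_pow_sub_pow p q m)) n (by omega)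
  rwa [map_sub, sub_eq_zero] at hpow

theorem filter_piAntidiag_eq_tuplesPnj (n j : ℕ) :
    ((Finset.univ : Finset (Fin n)).piAntidiag j).filter
      (fun μ => n = ∑ i : Fin n, (i.1 + 1) * μ i) = tuplesPnj n j := by
  ext μ
  simp only [tuplesPnj, Finset.mem_filter, Finset.mem_piAntidiag, Fintype.mem_piFinset,
    Finset.mem_range, Finset.mem_univ, implies_true, and_true]
  constructor
  · rintro ⟨hj, hn⟩
    refine ⟨fun i => ?_, hj, hn.symm⟩
    have := Finset.single_le_sum (f := fun i : Fin n => (i.1 + 1) * μ i)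
      (fun _ _ => Nat.zero_le _) (Finset.mem_univ i)
    have hle : μ i ≤ (i.1 + 1) * μ i := Nat.le_mul_of_pos_left _ (Nat.succ_pos _)
    omega
  · rintro ⟨-, hj, hn⟩
    exact ⟨hj, hn.symm⟩

theorem tuplesPnj_eq_empty {n j : ℕ} (h : n < j) : tuplesPnj n j = ∅ := by
  refine Finset.eq_empty_of_forall_notMem fun μ hμ => ?_
  obtain ⟨-, hj, hn⟩ := Finset.mem_filter.1 hμ
  have : ∑ i : Fin n, μ i ≤ ∑ i : Fin n, (i.1 + 1) * μ i :=
    Finset.sum_le_sum fun i _ => Nat.le_mul_of_pos_left _ (Nat.succ_pos _)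
  omega

theorem tuplesPnj_zero {n : ℕ} (hn : 1 ≤ n) : tuplesPnj n 0 = ∅ := by
  refine Finset.eq_empty_of_forall_notMem fun μ hμ => ?_
  obtain ⟨-, hj, hsum⟩ := Finset.mem_filter.1 hμ
  have hzero : ∀ i, μ i = 0 := by simpa using hj
  simp only [hzero, mul_zero, Finset.sum_const_zero] at hsum
  omega

theorem coeff_sum_C_mul_X_pow_pow {A : Type*} [CommRing A] (n j : ℕ) (d : Fin n → A) :
    PowerSeries.coeff n
      ((∑ i : Fin n, PowerSeries.C (d i) * (PowerSeries.X : PowerSeries A) ^ (i.1 + 1)) ^ j) =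
      ∑ μ ∈ tuplesPnj n j, (Nat.multinomial Finset.univ μ : A) * ∏ i, d i ^ μ i := by
  rw [Finset.sum_pow_eq_sum_piAntidiag, map_sum, ← filter_piAntidiag_eq_tuplesPnj,
    Finset.sum_filter]
  refine Finset.sum_congr rfl fun μ _ => ?_
  simp only [mul_pow, Finset.prod_mul_distrib, ← pow_mul, Finset.prod_pow_eq_pow_sum, ← map_pow,
    ← map_prod]
  rw [← map_natCast (PowerSeries.C (R := A)), PowerSeries.coeff_C_mul, PowerSeries.coeff_C_mul,
    PowerSeries.coeff_X_pow]
  split_ifs <;> simp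

theorem coeff_hasseSeries_eq {R : Type*} [CommRing R] (f : R[X]) {n k : ℕ} (hk : k ≤ n) :
    PowerSeries.coeff k (hasseSeries f) =
      PowerSeries.coeff k ((∑ i : Fin n, PowerSeries.C (hasseDeriv (i.1 + 1) f) *
        (PowerSeries.X : PowerSeries R[X]) ^ (i.1 + 1)) + PowerSeries.C f) := by
  rw [map_add, map_sum]
  simp only [hasseSeries, PowerSeries.coeff_mk, PowerSeries.coeff_C_mul, PowerSeries.coeff_X_pow,
    PowerSeries.coeff_C]
  cases k with
  | zero => simp
  | succ k =>
    rw [Finset.sum_eq_single (⟨k, hk⟩ : Fin n)]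
    · simp
    · intro i _ hi
      have : k ≠ i.1 := fun h => hi (Fin.ext h.symm)
      simp [this]
    · simp

/-- the Hasse-derivative power formula
`D_n(f^m) = ∑_{j=1}^{min(n,m)} f^{m−j} ( ∑_{μ ∈ P(n,j)} M_μ(m) ∏ᵢ (Dᵢ f)^{μᵢ} )`. -/
theorem stmt_9 (R : Type*) [CommRing R] (f : R[X]) (n m : ℕ) (hn : 1 ≤ n) (hm : 1 ≤ m) :
    hasseDeriv n (f ^ m) =
      ∑ j ∈ Finset.Icc 1 (min n m),
        f ^ (m - j) *
          ∑ μ ∈ tuplesPnj n j,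
            (Mcoef m j μ : R[X]) * ∏ i : Fin n, (hasseDeriv (i.1 + 1) f) ^ (μ i) := by
  have hcoeff : hasseDeriv n (f ^ m) = PowerSeries.coeff n (hasseSeries (f ^ m)) := by
    simp [hasseSeries]
  rw [hcoeff, hasseSeries_pow,
    PowerSeries.coeff_pow_eq_of_coeff_eq (fun k hk => coeff_hasseSeries_eq f hk), add_pow, map_sum]
  have hterm : ∀ j, PowerSeries.coeff n
      ((∑ i : Fin n, PowerSeries.C (hasseDeriv (i.1 + 1) f) *
        (PowerSeries.X : PowerSeries R[X]) ^ (i.1 + 1)) ^ j * PowerSeries.C f ^ (m - j) *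
          (m.choose j : PowerSeries R[X])) =
      f ^ (m - j) * ∑ μ ∈ tuplesPnj n j,
        (Mcoef m j μ : R[X]) * ∏ i : Fin n, (hasseDeriv (i.1 + 1) f) ^ (μ i) := by
    intro j
    rw [← map_natCast (PowerSeries.C (R := R[X])), ← map_pow, PowerSeries.coeff_mul_C,
      PowerSeries.coeff_mul_C, coeff_sum_C_mul_X_pow_pow, mul_comm _ (f ^ (m - j)), mul_assoc,
      Finset.sum_mul]
    congr 1
    refine Finset.sum_congr rfl fun μ _ => ?_
    rw [Mcoef, Nat.cast_mul]
    ring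
  have hsub : Finset.Icc 1 (min n m) ⊆ Finset.range (m + 1) := by
    intro j
    simp only [Finset.mem_Icc, Finset.mem_range]
    omega
  rw [← Finset.sum_subset hsub]
  · refine Finset.sum_congr rfl fun j _ => ?_
    exact hterm j
  · intro j hj hj'
    have hempty : tuplesPnj n j = ∅ := by
      rcases Nat.eq_zero_or_pos j with rfl | hpos
      · exact tuplesPnj_zero hn
      · refine tuplesPnj_eq_empty ?_
        simp only [Finset.mem_Icc, Finset.mem_range] at hj hj'
        omega
    rw [hterm, hempty, Finset.sum_empty, mul_zero]
end

section
/- Let r = p^m with p prime, let A = 𝔽_r[T] and k = 𝔽_r(T), and let v = (P) be a maximal ideal of A generated by a monic irreducible polynomial P. Let k_v be the completion of k with respect to the P-adic absolute value, let Ω_v be a fixed algebraic closure of k_v equipped with the spectral norm, let k_v^sep ⊆ Ω_v be the separable closure of k_v, let C_v be the completion of Ω_v, and let ι_v : Ω_v → C_v be the canonical embedding. Let t ≥ 1 and let N be a nilpotent t×t matrix with entries in C_v. Then there exists a unique 𝔽_r-algebra homomorphism φ : k_v^sep → M_t(C_v) such that (i) φ(T) = ι_v(T)·1 + N, (ii)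 the restriction of φ to k_v is continuous (M_t(C_v) carrying the topology of entrywise convergence), and (iii) for every x ∈ k_v^sep the matrix φ(x) − ι_v(x)·1 is nilpotent. Moreover φ is injective. -/
set_option synthInstance.maxHeartbeats 1000000
set_option maxHeartbeats 1000000

open IsDedekindDomain

/-- The completion `k_v` of `k = 𝔽_r(T)` at a maximal ideal `v = (P)` of `A = 𝔽_r[T]`. -/
noncomputable abbrev kvCompletion (Fr : Type*) [Field Fr]
    (v : HeightOneSpectrum (Polynomial Fr)) : Type _ :=
  v.adicCompletion (RatFunc Fr)

/-- The image of `T` in `k_v`. -/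
noncomputable def kvT (Fr : Type*) [Field Fr] (v : HeightOneSpectrum (Polynomial Fr)) :
    kvCompletion Fr v :=
  algebraMap (RatFunc Fr) (kvCompletion Fr v) RatFunc.X

/-- The canonical algebra structure of `k_v` on an intermediate field of an extension of
`k_v` (registered explicitly to help typeclass inference). -/
noncomputable local instance kvIntermediateFieldAlgebra (Fr : Type*) [Field Fr]
    (v : HeightOneSpectrum (Polynomial Fr)) (Ω : Type*) [Field Ω]
    [Algebra (kvCompletion Fr v) Ω] (S : IntermediateField (kvCompletion Fr v) Ω) :
    Algebra (kvCompletion Fr v) S :=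
  inferInstanceAs (Algebra (kvCompletion Fr v) S.toSubalgebra)

section

open Polynomial

/-- In characteristic `p`, if `c` is not a `p`-th power then `X ^ p ^ n - c` is irreducible. -/
theorem irreducible_X_pow_char_pow_sub_C {F : Type*} [Field F] (p n : ℕ) [Fact p.Prime] [CharP F p]
    {c : F} (hc : ∀ b : F, b ^ p ≠ c) : Irreducible (X ^ p ^ n - C c : F[X]) := by
  have : ExpChar F p := ExpChar.prime Fact.out
  have hq : 0 < p ^ n := pow_pos (Fact.out : p.Prime).pos n
  obtain ⟨a, ha⟩ := IsAlgClosed.exists_pow_nat_eq (algebraMap F (AlgebraicClosure F) c) hq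
  have hroot : aeval a (X ^ p ^ n - C c : F[X]) = 0 := by simp [ha]
  obtain ⟨m, y, hy⟩ := (minpoly.natSepDegree_eq_one_iff_eq_X_pow_sub_C p).mp
    ((minpoly.natSepDegree_eq_one_iff_pow_mem (F := F) (x := a) p).mpr ⟨n, c, ha.symm⟩)
  have hay : a ^ p ^ m = algebraMap F (AlgebraicClosure F) y := by
    have := minpoly.aeval F a
    rw [hy] at this
    simpa [sub_eq_zero] using this
  have hnm : n ≤ m := by
    by_contra! h
    obtain ⟨d, rfl⟩ := Nat.exists_eq_add_of_lt h
    apply hc (y ^ p ^ d)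
    apply (algebraMap F (AlgebraicClosure F)).injective
    rw [← ha, map_pow, map_pow, ← hay]
    ring
  have hmonic : (X ^ p ^ n - C c : F[X]).Monic := monic_X_pow_sub_C c hq.ne'
  have heq : minpoly F a = X ^ p ^ n - C c := by
    refine (eq_of_monic_of_dvd_of_natDegree_le (minpoly.monic ⟨_, hmonic, hroot⟩) hmonic
      (minpoly.dvd F a hroot) ?_).symm
    rw [hy, natDegree_X_pow_sub_C, natDegree_X_pow_sub_C]
    exact Nat.pow_le_pow_right (Fact.out : p.Prime).pos hnm
  rw [← heq]
  exact minpoly.irreducible ⟨_, hmonic, hroot⟩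

/-- If `L` is generated by `L ^ (p ^ n)` and an element `T` that is not a `p`-th power, a ring
homomorphism from `L` may be prescribed on `L ^ (p ^ n)` and, compatibly, on `T`. -/
theorem exists_ringHom_of_pow_eq {L S : Type*} [Field L] [Ring S] (p n : ℕ) [Fact p.Prime]
    [CharP L p] {T : L} (hT : ∀ b : L, b ^ p ≠ T)
    (hgen : ∀ M : Subfield L, (∀ a, a ^ p ^ n ∈ M) → T ∈ M → M = ⊤)
    (j : L →+* S) {s : S} (hcomm : ∀ a, Commute (j a) s) (hs : s ^ p ^ n = j (T ^ p ^ n)) :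
    ∃ φ : L →+* S, (∀ a, φ (a ^ p ^ n) = j (a ^ p ^ n)) ∧ φ T = s := by
  have : ExpChar L p := ExpChar.prime Fact.out
  let f : L[X] := X ^ p ^ n - C T
  have : Fact (Irreducible f) := ⟨irreducible_X_pow_char_pow_sub_C p n hT⟩
  let ψ : AdjoinRoot f →+* L := AdjoinRoot.lift (iterateFrobenius L p n) T (by
    simp [f, iterateFrobenius_def])
  have hψC (a : L) : ψ (AdjoinRoot.of f a) = a ^ p ^ n := by
    simp [ψ, iterateFrobenius_def]
  have hψX : ψ (AdjoinRoot.root f) = T := by simp [ψ]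
  have hsurj : Function.Surjective ψ := by
    rw [← RingHom.fieldRange_eq_top_iff]
    exact hgen _ (fun a => ⟨_, hψC a⟩) ⟨_, hψX⟩
  let e : AdjoinRoot f ≃+* L := RingEquiv.ofBijective ψ ⟨ψ.injective, hsurj⟩
  let g : L[X] →+* S := eval₂RingHom' (j.comp (iterateFrobenius L p n)) s fun a => hcomm _
  let χ : AdjoinRoot f →+* S := Ideal.Quotient.lift (Ideal.span {f}) g (by
    intro a ha
    obtain ⟨b, rfl⟩ := Ideal.mem_span_singleton.mp ha
    have : g f = 0 := by
      simp only [f, map_sub, map_pow]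
      simp [g, hs, iterateFrobenius_def]
    rw [map_mul, this, zero_mul])
  have hχ (h : L[X]) : χ (AdjoinRoot.mk f h) = g h := Ideal.Quotient.lift_mk _ _ _
  refine ⟨χ.comp e.symm, fun a => ?_, ?_⟩
  · have : e.symm (a ^ p ^ n) = AdjoinRoot.mk f (C a) := by
      rw [RingEquiv.symm_apply_eq]; exact (hψC a).symm
    simp only [RingHom.comp_apply, RingHom.coe_coe, this, hχ]
    simp [g, iterateFrobenius_def]
  · have : e.symm T = AdjoinRoot.mk f X := by
      rw [RingEquiv.symm_apply_eq]; exact hψX.symm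
    simp only [RingHom.comp_apply, RingHom.coe_coe, this, hχ]
    simp [g]

theorem ringHom_ext_of_pow {L S : Type*} [Field L] [Ring S] [Nontrivial S] {q : ℕ} {T : L}
    (hgen : ∀ M : Subfield L, (∀ a, a ^ q ∈ M) → T ∈ M → M = ⊤)
    {φ₁ φ₂ : L →+* S} (hpow : ∀ a, φ₁ (a ^ q) = φ₂ (a ^ q)) (hT : φ₁ T = φ₂ T) : φ₁ = φ₂ := by
  have := hgen (RingHom.eqLocusField φ₁ φ₂) hpow hT
  ext x
  exact (this ▸ Subfield.mem_top x : x ∈ RingHom.eqLocusField φ₁ φ₂)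

theorem Matrix.pow_card_eq_zero_of_isNilpotent {C : Type*} [Field C] {ι : Type*} [Fintype ι]
    [DecidableEq ι] {M : Matrix ι ι C} (hM : IsNilpotent M) : M ^ Fintype.card ι = 0 := by
  have h := (Matrix.isNilpotent_charpoly_sub_pow_of_isNilpotent hM).eq_zero
  have h2 := M.aeval_self_charpoly
  rw [sub_eq_zero.mp h] at h2
  simpa using h2

section

variable {𝕜 E : Type*} [NontriviallyNormedField 𝕜] [CompleteSpace 𝕜] [Field E]
    [TopologicalSpace E] [IsTopologicalRing E] [T2Space E]

theorem adjoin_eq_top_of_dense [Algebra 𝕜 E] [ContinuousSMul 𝕜 E]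
    {T : E} (hT : IsIntegral 𝕜 T)
    (hd : Dense (IntermediateField.adjoin 𝕜 {T} : Set E)) : IntermediateField.adjoin 𝕜 {T} = ⊤ := by
  have : FiniteDimensional 𝕜
      (Subalgebra.toSubmodule (IntermediateField.adjoin 𝕜 {T}).toSubalgebra) :=
    IntermediateField.adjoin.finiteDimensional hT
  have hc := Submodule.closed_of_finiteDimensional
    (Subalgebra.toSubmodule (IntermediateField.adjoin 𝕜 {T}).toSubalgebra)
  have := hc.closure_eq.symm.trans hd.closure_eq
  exact SetLike.coe_injective this

/-- Let `E` be a topological field over a complete field `𝕜` and let `T` have a power in `𝕜`.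
If `𝕜` and `T` generate a dense subfield, they generate `E`, and a ring homomorphism from `E`
is continuous as soon as its restriction to `𝕜` is. -/
theorem subfield_eq_top_of_dense (f : 𝕜 →+* E) (hf : Continuous f) {T : E} {q : ℕ} (hq : 0 < q)
    {c : 𝕜} (hc : f c = T ^ q) {D : Set E} (hD : Dense D)
    (hDM : ∀ M : Subfield E, (∀ a, f a ∈ M) → T ∈ M → D ⊆ M) :
    (∀ M : Subfield E, (∀ a, f a ∈ M) → T ∈ M → M = ⊤) ∧
    ∀ {S : Type*} [Ring S] [TopologicalSpace S] [IsTopologicalRing S] (g : E →+* S),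
      Continuous (g.comp f) → Continuous g := by
  let := f.toAlgebra
  have : ContinuousSMul 𝕜 E := ⟨by
    simp only [Algebra.smul_def]
    exact (hf.comp continuous_fst).mul continuous_snd⟩
  have hT : IsIntegral 𝕜 T := .of_pow hq (hc ▸ isIntegral_algebraMap (R := 𝕜) (x := c))
  have htop := adjoin_eq_top_of_dense hT (hD.mono (hDM (IntermediateField.adjoin 𝕜 {T}).toSubfield
    (fun a => (IntermediateField.adjoin 𝕜 {T}).algebraMap_mem a)
    (IntermediateField.mem_adjoin_simple_self 𝕜 T)))
  refine ⟨fun M hM hTM => ?_, fun {S} _ _ _ g hg => ?_⟩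
  · rw [eq_top_iff]
    intro x _
    have hx : x ∈ IntermediateField.adjoin 𝕜 {T} := htop ▸ IntermediateField.mem_top
    refine (Subfield.closure_le (t := M)).mpr ?_ hx
    rintro y (⟨a, rfl⟩ | rfl)
    exacts [hM a, hTM]
  · let : Module 𝕜 S := Module.compHom S (g.comp f)
    have hsmul (a : 𝕜) (s : S) : a • s = g (f a) * s := rfl
    have : ContinuousSMul 𝕜 S := ⟨by
      simp only [hsmul]
      exact (hg.comp continuous_fst).mul continuous_snd⟩
    have : FiniteDimensional 𝕜 E := by
      have := IntermediateField.adjoin.finiteDimensional hT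
      rw [htop] at this
      exact IntermediateField.topEquiv.toLinearEquiv.finiteDimensional (K := 𝕜)
    let l : E →ₗ[𝕜] S :=
      { g with
        map_smul' := fun a x => by
          simp [Algebra.smul_def, hsmul, RingHom.algebraMap_toAlgebra] }
    exact l.continuous_of_finiteDimensional

end

theorem subfield_eq_top_of_isSeparable {K L : Type*} [Field K] [Field L] [Algebra K L]
    [Algebra.IsSeparable K L] (p n : ℕ) [ExpChar K p] {M : Subfield L}
    (hK : ∀ a : K, algebraMap K L a ∈ M) (hpow : ∀ a, a ^ p ^ n ∈ M) : M = ⊤ := by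
  rw [eq_top_iff]
  intro x _
  let M' : IntermediateField K L := M.toIntermediateField hK
  have h : IntermediateField.adjoin K {x ^ p ^ n} ≤ M' :=
    IntermediateField.adjoin_simple_le_iff.mpr (hpow x)
  rw [← IntermediateField.adjoin_simple_eq_adjoin_pow_expChar_pow_of_isSeparable' K L x p n] at h
  exact h (IntermediateField.mem_adjoin_simple_self K x)

theorem pow_char_ne_algebraMap_of_isSeparable {K L : Type*} [Field K] [Field L] [Algebra K L]
    [Algebra.IsSeparable K L] (p : ℕ) [ExpChar K p] {c : K} (hc : ∀ b : K, b ^ p ≠ c) (b : L) :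
    b ^ p ≠ algebraMap K L c := by
  intro h
  have hb : b ∈ IntermediateField.adjoin K {b} := IntermediateField.mem_adjoin_simple_self K b
  rw [IntermediateField.adjoin_simple_eq_adjoin_pow_expChar_of_isSeparable' K L b p, h,
    IntermediateField.adjoin_simple_eq_bot_iff.mpr (IntermediateField.algebraMap_mem _ c),
    IntermediateField.mem_bot] at hb
  obtain ⟨y, rfl⟩ := hb
  exact hc y ((algebraMap K L).injective (by rw [map_pow, h]))

/-- Since `(φ x - x) ^ (p ^ n) = 0` for nilpotent `φ x - x`, the map `φ` is forced to be scalar on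
`L ^ (p ^ n)`, and `L` is generated by `L ^ (p ^ n)` and `T`. -/
theorem existsUnique_algHom_matrix {Fr K L C : Type*} [Field Fr] [Field K] [TopologicalSpace K]
    [Field L] [Algebra K L] [Algebra.IsSeparable K L] [Field C]
    [TopologicalSpace C] [IsTopologicalRing C] [Algebra L C] [Algebra Fr L] [Algebra Fr C]
    [IsScalarTower Fr L C] (p n t : ℕ) [Fact p.Prime] [CharP Fr p] [PerfectRing Fr p] [CharP K p]
    (ht : 1 ≤ t) (htn : t ≤ p ^ n) {T : K} (hT : ∀ b : K, b ^ p ≠ T)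
    (hgen : ∀ M : Subfield K, (∀ a, a ^ p ^ n ∈ M) → T ∈ M → M = ⊤)
    (hcont : ∀ g : K →+* Matrix (Fin t) (Fin t) C,
      Continuous (fun a => g (a ^ p ^ n)) → Continuous g)
    (hι : Continuous fun x : K => algebraMap L C (algebraMap K L x))
    (N : Matrix (Fin t) (Fin t) C) (hN : IsNilpotent N) :
    ∃! φ : L →ₐ[Fr] Matrix (Fin t) (Fin t) C,
      φ (algebraMap K L T) = algebraMap C _ (algebraMap L C (algebraMap K L T)) + N ∧
      Continuous (fun x : K => φ (algebraMap K L x)) ∧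
      ∀ x : L, IsNilpotent (φ x - algebraMap C _ (algebraMap L C x)) := by
  have : Nonempty (Fin t) := ⟨⟨0, ht⟩⟩
  have : ExpChar K p := ExpChar.prime Fact.out
  have : CharP L p := charP_of_injective_algebraMap (algebraMap K L).injective p
  have : CharP C p := charP_of_injective_algebraMap (algebraMap L C).injective p
  have : CharP (Matrix (Fin t) (Fin t) C) p :=
    charP_of_injective_algebraMap (algebraMap C (Matrix (Fin t) (Fin t) C)).injective p
  have hgenL (M : Subfield L) (hM : ∀ a, a ^ p ^ n ∈ M) (hTM : algebraMap K L T ∈ M) : M = ⊤ := by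
    refine subfield_eq_top_of_isSeparable (K := K) p n (fun a => ?_) hM
    have := hgen (M.comap (algebraMap K L)) (fun a => by simpa using hM (algebraMap K L a)) hTM
    exact (this ▸ Subfield.mem_top a : a ∈ M.comap (algebraMap K L))
  let j : L →+* Matrix (Fin t) (Fin t) C := (algebraMap C _).comp (algebraMap L C)
  have hj (a : L) (M : Matrix (Fin t) (Fin t) C) : Commute (j a) M :=
    Algebra.commutes (algebraMap L C a) M
  have hnil {M : Matrix (Fin t) (Fin t) C} (hM : IsNilpotent M) : M ^ p ^ n = 0 :=
    pow_eq_zero_of_le htn (by simpa using Matrix.pow_card_eq_zero_of_isNilpotent hM)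
  obtain ⟨φ, hφpow, hφT⟩ := exists_ringHom_of_pow_eq p n
    (pow_char_ne_algebraMap_of_isSeparable (L := L) p hT) hgenL j
    (s := j (algebraMap K L T) + N) (fun a => hj a _) (by
      rw [add_pow_char_pow_of_commute p _ (hj _ N), hnil hN, add_zero, map_pow])
  have hφFr (c : Fr) : φ (algebraMap Fr L c) = algebraMap Fr _ c := by
    obtain ⟨d, rfl⟩ := (bijective_iterateFrobenius Fr p n).surjective c
    rw [iterateFrobenius_def, map_pow, hφpow, ← map_pow]
    simp only [j, RingHom.comp_apply, ← IsScalarTower.algebraMap_apply]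
  refine ⟨{ φ with commutes' := hφFr }, ⟨hφT, ?_, fun x => ⟨p ^ n, ?_⟩⟩, ?_⟩
  · refine hcont (φ.comp (algebraMap K L)) ?_
    have hC : Continuous (algebraMap C (Matrix (Fin t) (Fin t) C)) := by
      change Continuous fun c : C => Matrix.diagonal fun _ : Fin t => c
      fun_prop
    convert (hC.comp hι).pow (p ^ n) using 2 with a
    rw [RingHom.comp_apply, map_pow, hφpow, map_pow]
    rfl
  · change (φ x - j x) ^ p ^ n = 0
    rw [sub_pow_char_pow_of_commute p _ (hj x _).symm, ← map_pow, ← map_pow, hφpow, sub_self]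
  · rintro χ ⟨hχT, -, hχ⟩
    have : (χ : L →+* Matrix (Fin t) (Fin t) C) = φ := by
      refine ringHom_ext_of_pow hgenL (fun a => ?_) (hχT.trans hφT.symm)
      have : (χ a - j a) ^ p ^ n = 0 := hnil (hχ a)
      rw [sub_pow_char_pow_of_commute p _ (hj a _).symm, sub_eq_zero] at this
      rw [hφpow, map_pow, map_pow]
      exact this
    ext1 x
    exact RingHom.congr_fun this x

theorem ratFunc_algebraMap_mem {Fr K : Type*} [Field Fr] [Field K] [Algebra Fr K]
    [Algebra (RatFunc Fr) K] [IsScalarTower Fr (RatFunc Fr) K] {M : Subfield K}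
    (hFr : ∀ c, algebraMap Fr K c ∈ M) (hX : algebraMap (RatFunc Fr) K RatFunc.X ∈ M)
    (x : RatFunc Fr) : algebraMap (RatFunc Fr) K x ∈ M := by
  have hpoly (f : Fr[X]) : algebraMap (RatFunc Fr) K (algebraMap Fr[X] (RatFunc Fr) f) ∈ M := by
    induction f using Polynomial.induction_on' with
    | add f g hf hg => simpa using add_mem hf hg
    | monomial n c =>
      rw [← C_mul_X_pow_eq_monomial, map_mul, map_mul, map_pow, map_pow, RatFunc.algebraMap_X,
        RatFunc.algebraMap_C, ← RatFunc.algebraMap_eq_C, ← IsScalarTower.algebraMap_apply]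
      exact mul_mem (hFr c) (pow_mem hX n)
  obtain ⟨f, g, _, rfl⟩ := IsFractionRing.div_surjective (A := Fr[X]) x
  rw [map_div₀]
  exact div_mem (hpoly f) (hpoly g)

/-- The variable `T` is not a `p`-th power in the completion of `𝔽(T)` at a place. -/
theorem pow_char_ne_adicCompletion_X {Fr : Type*} [Field Fr] (p : ℕ) [Fact p.Prime] [CharP Fr p]
    [PerfectRing Fr p] (v : HeightOneSpectrum Fr[X]) [Algebra Fr (v.adicCompletion (RatFunc Fr))]
    [IsScalarTower Fr (RatFunc Fr) (v.adicCompletion (RatFunc Fr))]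
    (b : v.adicCompletion (RatFunc Fr)) :
    b ^ p ≠ algebraMap (RatFunc Fr) (v.adicCompletion (RatFunc Fr)) RatFunc.X := by
  intro hb
  have : CharP (v.adicCompletion (RatFunc Fr)) p :=
    charP_of_injective_algebraMap (algebraMap Fr _).injective p
  have : ExpChar (v.adicCompletion (RatFunc Fr)) p := ExpChar.prime Fact.out
  obtain ⟨π, hπ⟩ := v.valuation_exists_uniformizer (RatFunc Fr)
  obtain ⟨y, hy⟩ := ratFunc_algebraMap_mem
    (M := (frobenius (v.adicCompletion (RatFunc Fr)) p).fieldRange)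
    (fun c => by
      obtain ⟨d, rfl⟩ := (bijective_frobenius Fr p).surjective c
      exact ⟨algebraMap Fr _ d, by simp [frobenius_def]⟩) ⟨b, hb⟩ π
  have hval := v.valuedAdicCompletion_eq_valuation' π
  change Valued.v (algebraMap (RatFunc Fr) (v.adicCompletion (RatFunc Fr)) π) = _ at hval
  rw [← hy, hπ, frobenius_def, map_pow] at hval
  have hlog := congrArg WithZero.log hval
  rw [WithZero.log_pow, WithZero.log_exp, nsmul_eq_mul] at hlog
  have hdvd : (p : ℤ) ∣ 1 := ⟨-(WithZero.log (Valued.v y)), by linarith⟩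
  exact (Fact.out : p.Prime).one_lt.ne'
    (by exact_mod_cast Int.eq_one_of_dvd_one (by positivity) hdvd)

/-- The completion `k_v` is generated by `k_v ^ (p ^ n)` and `T`, and a ring homomorphism from `k_v`
is continuous as soon as its restriction to `k_v ^ (p ^ n)` is. -/
theorem adicCompletion_eq_top_and_continuous_of_pow {Fr : Type*} [Field Fr] (p n : ℕ)
    [Fact p.Prime] [CharP Fr p] [PerfectRing Fr p] (v : HeightOneSpectrum Fr[X])
    [Algebra Fr (v.adicCompletion (RatFunc Fr))]
    [IsScalarTower Fr (RatFunc Fr) (v.adicCompletion (RatFunc Fr))]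
    [CharP (v.adicCompletion (RatFunc Fr)) p] :
    (∀ M : Subfield (v.adicCompletion (RatFunc Fr)), (∀ a, a ^ p ^ n ∈ M) →
      algebraMap (RatFunc Fr) (v.adicCompletion (RatFunc Fr)) RatFunc.X ∈ M → M = ⊤) ∧
    ∀ {S : Type*} [Ring S] [TopologicalSpace S] [IsTopologicalRing S]
      (g : v.adicCompletion (RatFunc Fr) →+* S),
      Continuous (fun a => g (a ^ p ^ n)) → Continuous g := by
  have : ExpChar (v.adicCompletion (RatFunc Fr)) p := ExpChar.prime Fact.out
  let := Valuation.IsRankOneDiscrete.rankOne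
    (Valued.v : Valuation (v.adicCompletion (RatFunc Fr)) _) (e := 2) (by norm_num)
  let := Valued.toNontriviallyNormedField (v.adicCompletion (RatFunc Fr))
    (WithZero (Multiplicative ℤ))
  refine subfield_eq_top_of_dense (iterateFrobenius (v.adicCompletion (RatFunc Fr)) p n)
    (continuous_pow (p ^ n)) (pow_pos (Fact.out : p.Prime).pos n)
    (c := algebraMap (RatFunc Fr) _ RatFunc.X) rfl (v.denseRange_algebraMap (RatFunc Fr))
    fun M hM hX => ?_
  rintro _ ⟨x, rfl⟩
  refine ratFunc_algebraMap_mem (fun c => ?_) hX x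
  obtain ⟨d, rfl⟩ := (bijective_iterateFrobenius Fr p n).surjective c
  rw [iterateFrobenius_def, map_pow]
  exact hM _

end

/-- the `v`-adic analogue of Statement 8: given a nilpotent `t×t` matrix `N`
over `C_v`, there is exactly one `𝔽_r`-algebra homomorphism `φ : k_v^sep → M_t(C_v)` with
`φ(T) = ι_v(T)·1 + N`, whose restriction to `k_v` is continuous, and all of whose values have
the form `ι_v(x)·1 + (nilpotent)`; moreover `φ` is injective. -/
theorem stmt_12 (p m : ℕ) [Fact p.Prime] (hm : 0 < m)
    (Fr : Type*) [Field Fr] [Fintype Fr] (hcard : Fintype.card Fr = p ^ m)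
    (v : HeightOneSpectrum (Polynomial Fr))
    (Ω : Type*) [Field Ω] [Algebra (kvCompletion Fr v) Ω]
    [IsAlgClosure (kvCompletion Fr v) Ω]
    [Algebra Fr Ω] [Algebra Fr (kvCompletion Fr v)]
    [IsScalarTower Fr (RatFunc Fr) (kvCompletion Fr v)]
    [IsScalarTower Fr (kvCompletion Fr v) Ω]
    (C : Type*) [NormedField C] [CompleteSpace C] [IsAlgClosed C] [IsUltrametricDist C]
    [Algebra Ω C] [Algebra (kvCompletion Fr v) C] [IsScalarTower (kvCompletion Fr v) Ω C]
    [Algebra Fr C] [IsScalarTower Fr Ω C]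
    (hι : Continuous (algebraMap (kvCompletion Fr v) C))
    (t : ℕ) (ht : 1 ≤ t) (N : Matrix (Fin t) (Fin t) C) (hN : IsNilpotent N) :
    (∃! φ : separableClosure (kvCompletion Fr v) Ω →ₐ[Fr] Matrix (Fin t) (Fin t) C,
        φ (algebraMap (kvCompletion Fr v) (separableClosure (kvCompletion Fr v) Ω)
            (kvT Fr v)) =
          algebraMap C (Matrix (Fin t) (Fin t) C)
            (algebraMap (kvCompletion Fr v) C (kvT Fr v)) + N ∧
        Continuous (fun x : kvCompletion Fr v =>
          φ (algebraMap (kvCompletion Fr v) (separableClosure (kvCompletion Fr v) Ω) x)) ∧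
        ∀ x : separableClosure (kvCompletion Fr v) Ω,
          IsNilpotent (φ x -
            algebraMap C (Matrix (Fin t) (Fin t) C) (algebraMap Ω C (x : Ω)))) ∧
    ∀ φ : separableClosure (kvCompletion Fr v) Ω →ₐ[Fr] Matrix (Fin t) (Fin t) C,
      (φ (algebraMap (kvCompletion Fr v) (separableClosure (kvCompletion Fr v) Ω)
            (kvT Fr v)) =
          algebraMap C (Matrix (Fin t) (Fin t) C)
            (algebraMap (kvCompletion Fr v) C (kvT Fr v)) + N ∧
        Continuous (fun x : kvCompletion Fr v =>
          φ (algebraMap (kvCompletion Fr v) (separableClosure (kvCompletion Fr v) Ω) x)) ∧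
        ∀ x : separableClosure (kvCompletion Fr v) Ω,
          IsNilpotent (φ x -
            algebraMap C (Matrix (Fin t) (Fin t) C) (algebraMap Ω C (x : Ω)))) →
      Function.Injective φ := by
  have : CharP Fr p := charP_of_card_eq_prime_pow hcard
  have : CharP (kvCompletion Fr v) p :=
    charP_of_injective_algebraMap (algebraMap Fr (kvCompletion Fr v)).injective p
  have : Algebra.IsSeparable (kvCompletion Fr v) (separableClosure (kvCompletion Fr v) Ω) :=
    separableClosure.isSeparable (kvCompletion Fr v) Ω
  have : Nontrivial (Matrix (Fin t) (Fin t) C) := by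
    have : Nonempty (Fin t) := ⟨⟨0, ht⟩⟩
    infer_instance
  have hgen := adicCompletion_eq_top_and_continuous_of_pow p t v
  have hιL : Continuous fun x : kvCompletion Fr v =>
      algebraMap (separableClosure (kvCompletion Fr v) Ω) C
        (algebraMap (kvCompletion Fr v) (separableClosure (kvCompletion Fr v) Ω) x) := by
    convert hι using 2 with x
    exact (IsScalarTower.algebraMap_apply (kvCompletion Fr v) Ω C x).symm
  have hTC : algebraMap (separableClosure (kvCompletion Fr v) Ω) C
        (algebraMap (kvCompletion Fr v) (separableClosure (kvCompletion Fr v) Ω) (kvT Fr v)) =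
      algebraMap (kvCompletion Fr v) C (kvT Fr v) :=
    (IsScalarTower.algebraMap_apply (kvCompletion Fr v) Ω C _).symm
  have : IsScalarTower Fr (separableClosure (kvCompletion Fr v) Ω) C :=
    .of_algebraMap_eq fun x => IsScalarTower.algebraMap_apply Fr Ω C x
  have key := existsUnique_algHom_matrix (Fr := Fr) (L := separableClosure (kvCompletion Fr v) Ω)
    p t t ht (Nat.lt_pow_self (Fact.out : p.Prime).one_lt).le (pow_char_ne_adicCompletion_X p v)
    hgen.1 hgen.2 hιL N hN
  exact ⟨hTC ▸ key, fun φ _ => φ.toRingHom.injective⟩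
end
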